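/- Let S be a Γ-semiring with a left unity and a right unity, and let L be its left operator semiring. The map σ ↦ σ⁺' is a bijection from the set of fuzzy ideals of S onto the set of fuzzy ideals of L which, together with its inverse μ ↦ μ⁺, preserves pointwise inclusion; hence it is a lattice isomorphism between the lattice of fuzzy ideals of S and the lattice of fuzzy ideals of L (with lattice operations ⊕ and pointwise minimum). -/

import Mathlib

/-!
The two composites are computed by the unities. For a fuzzy ideal `σ` of `S`,
`σ⁺'⁺(x) = inf σ(xγs)`; this is at least `σ(x)`, and at most `σ(x)` because
`x = ∑ⱼ x γⱼ fⱼ` and `σ` of a finite sum is at least the minimum of its values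
on the summands (`plus_plusPrime`).
For a fuzzy ideal `μ` of `L`, `μ⁺'⁺` is governed by the identity `ℓ(f(s),γ) = f ∘ ℓ(s,γ)`
for `f ∈ L`; the left unity expresses `f` as `∑ᵢ f ∘ ℓ(eᵢ,δᵢ)` (`plusPrime_plus`).

Both maps are monotone, so they are inverse order isomorphisms. Infima commute with `min`,
which handles meets. For sums, `μ₁ ⊕ μ₂` is a fuzzy ideal of `L` above `μ₁` and `μ₂`
(`IsFuzzyIdealL.fuzzySum`, `IsFuzzyIdealL.le_fuzzySum`), so `(σ₁⁺' ⊕ σ₂⁺')⁺` is a fuzzy ideal of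
`S` above `σ₁` and `σ₂`, hence above `σ₁ ⊕ σ₂`; applying `⁺'` gives the nontrivial inequality.
-/

instance : Fact ((0:ℝ) ≤ 1) := ⟨zero_le_one⟩

/-- A `Γ`-semiring structure on additive commutative monoids `S` and `Γ`. -/
structure GammaSemiring (S Γ : Type*) [AddCommMonoid S] [AddCommMonoid Γ] where
  tmul : S → Γ → S → S
  add_left : ∀ (a b : S) (α : Γ) (c : S), tmul (a + b) α c = tmul a α c + tmul b α c
  add_right : ∀ (a : S) (α : Γ) (b c : S), tmul a α (b + c) = tmul a α b + tmul a α c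
  add_mid : ∀ (a : S) (α β : Γ) (b : S), tmul a (α + β) b = tmul a α b + tmul a β b
  tmul_assoc : ∀ (a : S) (α : Γ) (b : S) (β : Γ) (c : S),
    tmul a α (tmul b β c) = tmul (tmul a α b) β c
  zero_left : ∀ (α : Γ) (x : S), tmul 0 α x = 0
  zero_right : ∀ (x : S) (α : Γ), tmul x α 0 = 0
  zero_mid : ∀ (x y : S), tmul x 0 y = 0

namespace GammaSemiring

variable {S Γ : Type*} [AddCommMonoid S] [AddCommMonoid Γ]

/-- The left translation map `ℓ(x,α) : a ↦ xαa`. -/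
def ell (G : GammaSemiring S Γ) (x : S) (α : Γ) : S → S := fun a => G.tmul x α a

/-- Membership in the left operator semiring: the additive closure of the maps `ℓ(x,α)`. -/
inductive InL (G : GammaSemiring S Γ) : (S → S) → Prop
  | basic (x : S) (α : Γ) : InL G (G.ell x α)
  | add {f g : S → S} : InL G f → InL G g → InL G (f + g)

lemma inL_zero (G : GammaSemiring S Γ) : G.InL (0 : S → S) := by
  have h : G.ell (0 : S) (0 : Γ) = (0 : S → S) := funext fun a => G.zero_left 0 a
  exact h ▸ InL.basic 0 0

lemma InL.comp {G : GammaSemiring S Γ} {f g : S → S} (hf : G.InL f) (hg : G.InL g) :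
    G.InL (f ∘ g) := by
  induction hf with
  | basic x α =>
    induction hg with
    | basic y β =>
      have h : G.ell x α ∘ G.ell y β = G.ell (G.tmul x α y) β :=
        funext fun a => G.tmul_assoc x α y β a
      exact h ▸ InL.basic _ _
    | add hg₁ hg₂ ih₁ ih₂ =>
      rename_i g₁ g₂
      have h : G.ell x α ∘ (g₁ + g₂) = (G.ell x α ∘ g₁) + (G.ell x α ∘ g₂) :=
        funext fun a => G.add_right x α (g₁ a) (g₂ a)
      exact h ▸ InL.add ih₁ ih₂
  | add hf₁ hf₂ ih₁ ih₂ =>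
    rename_i f₁ f₂
    have h : (f₁ + f₂) ∘ g = (f₁ ∘ g) + (f₂ ∘ g) := rfl
    exact h ▸ InL.add ih₁ ih₂

/-- The left operator semiring `L` of a `Γ`-semiring, as a type: the subtype of
maps `S → S` belonging to the additive closure of the `ℓ(x,α)`. -/
def LOp (G : GammaSemiring S Γ) : Type _ := {f : S → S // G.InL f}

/-- The zero element of `L` is the zero map. -/
instance (G : GammaSemiring S Γ) : Zero G.LOp := ⟨⟨0, G.inL_zero⟩⟩

/-- Addition in `L` is pointwise addition of maps. -/
instance (G : GammaSemiring S Γ) : Add G.LOp := ⟨fun f g => ⟨f.1 + g.1, f.2.add g.2⟩⟩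

/-- Multiplication in `L` is composition of maps. -/
instance (G : GammaSemiring S Γ) : Mul G.LOp := ⟨fun f g => ⟨f.1 ∘ g.1, f.2.comp g.2⟩⟩

/-- `S` has a left unity `∑ᵢ [eᵢ, δᵢ]`, i.e. `∑ᵢ eᵢ δᵢ a = a` for all `a ∈ S`. -/
def HasLeftUnity (G : GammaSemiring S Γ) : Prop :=
  ∃ (n : ℕ) (e : Fin n → S) (δ : Fin n → Γ), ∀ a : S, ∑ i, G.tmul (e i) (δ i) a = a

/-- `S` has a right unity `∑ⱼ [γⱼ, fⱼ]`, i.e. `∑ⱼ a γⱼ fⱼ = a` for all `a ∈ S`. -/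
def HasRightUnity (G : GammaSemiring S Γ) : Prop :=
  ∃ (n : ℕ) (γ : Fin n → Γ) (f : Fin n → S), ∀ a : S, ∑ j, G.tmul a (γ j) (f j) = a

/-- A fuzzy ideal of the `Γ`-semiring `S`: a `[0,1]`-valued function with
`σ(0) = 1`, `σ(x+y) ≥ min(σ(x),σ(y))` and `σ(xγy) ≥ max(σ(x),σ(y))`. -/
def IsFuzzyIdeal (G : GammaSemiring S Γ) (sigma : S → unitInterval) : Prop :=
  sigma 0 = 1 ∧ (∀ x y : S, min (sigma x) (sigma y) ≤ sigma (x + y)) ∧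
    ∀ (x : S) (γ : Γ) (y : S), max (sigma x) (sigma y) ≤ sigma (G.tmul x γ y)

/-- A fuzzy ideal of the left operator semiring `L`. -/
def IsFuzzyIdealL (G : GammaSemiring S Γ) (mu : G.LOp → unitInterval) : Prop :=
  mu 0 = 1 ∧ (∀ f g : G.LOp, min (mu f) (mu g) ≤ mu (f + g)) ∧
    ∀ f g : G.LOp, max (mu f) (mu g) ≤ mu (f * g)

/-- A fuzzy subset is non-constant if it takes at least two distinct values. -/
def NonConstant {X : Type*} (mu : X → unitInterval) : Prop := ∃ a b : X, mu a ≠ mu b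

/-- `μ⁺(x) = inf_{γ ∈ Γ} μ(ℓ(x,γ))` for a fuzzy subset `μ` of `L`. -/
noncomputable def plus (G : GammaSemiring S Γ) (mu : G.LOp → unitInterval) :
    S → unitInterval :=
  fun x => ⨅ γ : Γ, mu ⟨G.ell x γ, InL.basic x γ⟩

/-- `σ⁺'(f) = inf_{s ∈ S} σ(f(s))` for a fuzzy subset `σ` of `S`. -/
noncomputable def plusPrime (G : GammaSemiring S Γ) (sigma : S → unitInterval) :
    G.LOp → unitInterval :=
  fun f => ⨅ s : S, sigma (f.1 s)

/-- The sum `μ₁ ⊕ μ₂` of two fuzzy subsets: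
`(μ₁ ⊕ μ₂)(x) = sup { min(μ₁(u), μ₂(v)) : u + v = x }`. -/
noncomputable def fuzzySum {X : Type*} [Add X] (mu₁ mu₂ : X → unitInterval) :
    X → unitInterval :=
  fun x => sSup {r : unitInterval | ∃ u v : X, u + v = x ∧ r = min (mu₁ u) (mu₂ v)}

end GammaSemiring
namespace GammaSemiring

variable {S Γ : Type*} [AddCommMonoid S] [AddCommMonoid Γ]

/-- An ideal of the `Γ`-semiring `S`: a nonempty subset closed under addition and under
multiplication by elements of `S` on either side. -/
def IsIdeal (G : GammaSemiring S Γ) (A : Set S) : Prop :=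
  A.Nonempty ∧ (∀ a ∈ A, ∀ b ∈ A, a + b ∈ A) ∧
    ∀ a ∈ A, ∀ (x : S) (γ : Γ), G.tmul x γ a ∈ A ∧ G.tmul a γ x ∈ A

/-- An ideal of the left operator semiring `L`. -/
def IsIdealL (G : GammaSemiring S Γ) (J : Set G.LOp) : Prop :=
  J.Nonempty ∧ (∀ f ∈ J, ∀ g ∈ J, f + g ∈ J) ∧
    ∀ f ∈ J, ∀ g : G.LOp, f * g ∈ J ∧ g * f ∈ J

/-- `I⁺' = { f ∈ L : f(s) ∈ I for all s ∈ S }` for a subset `I` of `S`. -/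
def idealPlusPrime (G : GammaSemiring S Γ) (A : Set S) : Set G.LOp :=
  {f : G.LOp | ∀ s : S, f.1 s ∈ A}

/-- `J⁺ = { a ∈ S : ℓ(a,γ) ∈ J for all γ ∈ Γ }` for a subset `J` of `L`. -/
def idealPlus (G : GammaSemiring S Γ) (J : Set G.LOp) : Set S :=
  {a : S | ∀ γ : Γ, (⟨G.ell a γ, InL.basic a γ⟩ : G.LOp) ∈ J}

/-- `S` is zero-divisor free: `aαb = 0` implies `a = 0` or `α = 0` or `b = 0`. -/
def ZDF (G : GammaSemiring S Γ) : Prop :=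
  ∀ (a : S) (α : Γ) (b : S), G.tmul a α b = 0 → a = 0 ∨ α = 0 ∨ b = 0

/-- `S` is a commutative `Γ`-semiring: `aαb = bαa`. -/
def IsCommutative (G : GammaSemiring S Γ) : Prop :=
  ∀ (a : S) (α : Γ) (b : S), G.tmul a α b = G.tmul b α a

/-- A commutative `Γ`-semiring `S` is a `Γ`-semifield if for all `a ≠ 0` and `α ≠ 0` there
are `b ∈ S`, `β ∈ Γ` with `aαbβd = d` for all `d ∈ S`. -/
def IsGammaSemifield (G : GammaSemiring S Γ) : Prop :=
  G.IsCommutative ∧ ∀ a : S, a ≠ 0 → ∀ α : Γ, α ≠ 0 →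
    ∃ (b : S) (β : Γ), ∀ d : S, G.tmul (G.tmul a α b) β d = d

/-- The `Γₙ`-semiring product on `n × n` matrices:
`(A Δ B) i j = ∑ t ∑ k, (A i t) (Δ t k) (B k j)`. -/
def matTmul (G : GammaSemiring S Γ) {n : ℕ} (A : Matrix (Fin n) (Fin n) S)
    (D : Matrix (Fin n) (Fin n) Γ) (B : Matrix (Fin n) (Fin n) S) :
    Matrix (Fin n) (Fin n) S :=
  Matrix.of fun i j => ∑ t, ∑ k, G.tmul (A i t) (D t k) (B k j)

/-- A fuzzy ideal of the matrix `Γₙ`-semiring `Sₙ`, defined in the same way as for `S`,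
with `Sₙ`, `Γₙ` in place of `S`, `Γ`. -/
def IsFuzzyIdealMatrix (G : GammaSemiring S Γ) {n : ℕ}
    (mu : Matrix (Fin n) (Fin n) S → unitInterval) : Prop :=
  mu 0 = 1 ∧ (∀ A B : Matrix (Fin n) (Fin n) S, min (mu A) (mu B) ≤ mu (A + B)) ∧
    ∀ (A : Matrix (Fin n) (Fin n) S) (D : Matrix (Fin n) (Fin n) Γ)
      (B : Matrix (Fin n) (Fin n) S), max (mu A) (mu B) ≤ mu (G.matTmul A D B)

end GammaSemiring

open Classical in
/-- The characteristic function of a subset, as a fuzzy subset. -/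
noncomputable def fuzzyIndicator {X : Type*} (A : Set X) : X → unitInterval :=
  fun x => if x ∈ A then 1 else 0

/-- `μₙ`, the fuzzy subset of `Sₙ` induced by a fuzzy subset `μ` of `S`:
`μₙ(A) = min { μ(Aᵢⱼ) : 1 ≤ i,j ≤ n }`. -/
noncomputable def matFuzzy {S : Type*} {n : ℕ} (mu : S → unitInterval) :
    Matrix (Fin n) (Fin n) S → unitInterval :=
  fun A => ⨅ i, ⨅ j, mu (A i j)


variable {S Γ : Type*} [AddCommMonoid S] [AddCommMonoid Γ]

namespace GammaSemiring

/-! ### Elements of `L` as additive maps -/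

lemma LOp.ext' {G : GammaSemiring S Γ} {f g : G.LOp} (h : ∀ s, f.1 s = g.1 s) : f = g :=
  Subtype.ext (funext h)

/-- The map `ℓ(x,γ)` as an element of `L`. -/
def ellOp (G : GammaSemiring S Γ) (x : S) (γ : Γ) : G.LOp := ⟨G.ell x γ, InL.basic x γ⟩

lemma InL.map_add {G : GammaSemiring S Γ} {f : S → S} (hf : G.InL f) (a b : S) :
    f (a + b) = f a + f b := by
  induction hf with
  | basic x α => exact G.add_right x α a b
  | add _ _ ih₁ ih₂ => simp only [Pi.add_apply, ih₁, ih₂]; exact add_add_add_comm _ _ _ _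

lemma InL.map_zero {G : GammaSemiring S Γ} {f : S → S} (hf : G.InL f) : f 0 = 0 := by
  induction hf with
  | basic x α => exact G.zero_right x α
  | add _ _ ih₁ ih₂ => simp [ih₁, ih₂]

lemma InL.map_sum {G : GammaSemiring S Γ} {f : S → S} (hf : G.InL f) {ι : Type*}
    (t : Finset ι) (a : ι → S) : f (∑ i ∈ t, a i) = ∑ i ∈ t, f (a i) :=
  _root_.map_sum (AddMonoidHom.mk ⟨f, hf.map_zero⟩ hf.map_add) a t

lemma InL.map_tmul {G : GammaSemiring S Γ} {f : S → S} (hf : G.InL f) (s : S) (γ : Γ) (a : S) :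
    f (G.tmul s γ a) = G.tmul (f s) γ a := by
  induction hf with
  | basic x α => exact G.tmul_assoc x α s γ a
  | add _ _ ih₁ ih₂ => simp only [Pi.add_apply, ih₁, ih₂, G.add_left]

lemma LOp.ell_apply_eq_mul (G : GammaSemiring S Γ) (f : G.LOp) (s : S) (γ : Γ) :
    G.ellOp (f.1 s) γ = f * G.ellOp s γ :=
  LOp.ext' fun a => (f.2.map_tmul s γ a).symm

/-! ### The two maps on fuzzy ideals -/

/-- Elements of `L` preserve the upper level sets of a fuzzy ideal of `S`. -/
lemma IsFuzzyIdeal.le_apply {G : GammaSemiring S Γ} {σ : S → unitInterval}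
    (h : G.IsFuzzyIdeal σ) {f : S → S} (hf : G.InL f) (y : S) : σ y ≤ σ (f y) := by
  induction hf with
  | basic x α => exact (le_max_right _ _).trans (h.2.2 x α y)
  | add _ _ ih₁ ih₂ => exact (le_min ih₁ ih₂).trans (h.2.1 _ _)

lemma IsFuzzyIdeal.le_sum {G : GammaSemiring S Γ} {σ : S → unitInterval}
    (h : G.IsFuzzyIdeal σ) {ι : Type*} (t : Finset ι) (a : ι → S) (c : unitInterval)
    (hc : ∀ i, c ≤ σ (a i)) : c ≤ σ (∑ i ∈ t, a i) := by
  classical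
  induction t using Finset.induction_on with
  | empty => rw [Finset.sum_empty, h.1]; exact unitInterval.le_one'
  | insert i t hi ih => rw [Finset.sum_insert hi]; exact (le_min (hc i) ih).trans (h.2.1 _ _)

/-- The lower bound for a fuzzy ideal of `L` on a finite sum, with the sum described
pointwise since `LOp` only carries bare operations. -/
lemma IsFuzzyIdealL.le_of_eq_sum {G : GammaSemiring S Γ} {μ : G.LOp → unitInterval}
    (h : G.IsFuzzyIdealL μ) {ι : Type*} (t : Finset ι) (F : ι → G.LOp) (c : unitInterval)
    (hc : ∀ i, c ≤ μ (F i)) (f : G.LOp) (hf : ∀ s, f.1 s = ∑ i ∈ t, (F i).1 s) : c ≤ μ f := by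
  classical
  suffices ∃ g : G.LOp, (∀ s, g.1 s = ∑ i ∈ t, (F i).1 s) ∧ c ≤ μ g by
    obtain ⟨g, hg, hcg⟩ := this
    rwa [LOp.ext' fun s => (hf s).trans (hg s).symm]
  clear hf f
  induction t using Finset.induction_on with
  | empty => exact ⟨0, fun s => rfl, by rw [h.1]; exact unitInterval.le_one'⟩
  | insert i t hi ih =>
    obtain ⟨g, hg, hcg⟩ := ih
    refine ⟨F i + g, fun s => ?_, (le_min (hc i) hcg).trans (h.2.1 _ _)⟩
    rw [Finset.sum_insert hi, ← hg]
    rfl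

lemma IsFuzzyIdeal.plusPrime {G : GammaSemiring S Γ} {σ : S → unitInterval}
    (h : G.IsFuzzyIdeal σ) : G.IsFuzzyIdealL (G.plusPrime σ) := by
  refine ⟨?_, fun f g => le_iInf fun s => ?_, fun f g => max_le ?_ ?_⟩
  · exact le_antisymm unitInterval.le_one' (le_iInf fun s => h.1.ge)
  · exact (min_le_min (iInf_le _ s) (iInf_le _ s)).trans (h.2.1 _ _)
  · exact le_iInf fun s => iInf_le (fun s => σ (f.1 s)) (g.1 s)
  · exact le_iInf fun s => (iInf_le _ s).trans (h.le_apply f.2 (g.1 s))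

lemma IsFuzzyIdealL.plus {G : GammaSemiring S Γ} {μ : G.LOp → unitInterval}
    (h : G.IsFuzzyIdealL μ) : G.IsFuzzyIdeal (G.plus μ) := by
  have key (x : S) (γ : Γ) (y : S) (δ : Γ) :
      G.ellOp (G.tmul x γ y) δ = G.ellOp x γ * G.ellOp y δ :=
    LOp.ext' fun a => (G.tmul_assoc x γ y δ a).symm
  refine ⟨?_, fun x y => le_iInf fun γ => ?_, fun x γ y => le_iInf fun δ => ?_⟩
  · refine le_antisymm unitInterval.le_one' (le_iInf fun γ => ?_)
    change 1 ≤ μ (G.ellOp 0 γ)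
    rw [show G.ellOp 0 γ = 0 from LOp.ext' fun a => G.zero_left γ a, h.1]
  · change _ ≤ μ (G.ellOp (x + y) γ)
    rw [show G.ellOp (x + y) γ = G.ellOp x γ + G.ellOp y γ from
      LOp.ext' fun a => G.add_left x y γ a]
    exact (min_le_min (iInf_le _ γ) (iInf_le _ γ)).trans (h.2.1 _ _)
  · change _ ≤ μ (G.ellOp (G.tmul x γ y) δ)
    rw [key]
    exact (max_le_max (iInf_le _ γ) (iInf_le _ δ)).trans (h.2.2 _ _)

lemma plusPrime_mono (G : GammaSemiring S Γ) {σ τ : S → unitInterval} (h : ∀ x, σ x ≤ τ x)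
    (f : G.LOp) : G.plusPrime σ f ≤ G.plusPrime τ f :=
  iInf_mono fun _ => h _

lemma plus_mono (G : GammaSemiring S Γ) {μ ν : G.LOp → unitInterval} (h : ∀ f, μ f ≤ ν f)
    (x : S) : G.plus μ x ≤ G.plus ν x :=
  iInf_mono fun _ => h _

lemma plus_plusPrime {G : GammaSemiring S Γ} (hRU : G.HasRightUnity) {σ : S → unitInterval}
    (h : G.IsFuzzyIdeal σ) : G.plus (G.plusPrime σ) = σ := by
  obtain ⟨n, γ, f, hu⟩ := hRU
  funext x
  refine le_antisymm ?_ (le_iInf fun δ => le_iInf fun s =>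
    (le_max_left _ _).trans (h.2.2 x δ s))
  conv_rhs => rw [← hu x]
  exact h.le_sum _ _ _ fun j => (iInf_le _ (γ j)).trans (iInf_le _ (f j))

lemma plusPrime_plus {G : GammaSemiring S Γ} (hLU : G.HasLeftUnity) {μ : G.LOp → unitInterval}
    (h : G.IsFuzzyIdealL μ) : G.plusPrime (G.plus μ) = μ := by
  obtain ⟨n, e, δ, hu⟩ := hLU
  funext f
  apply le_antisymm
  · refine h.le_of_eq_sum Finset.univ
      (fun i => f * G.ellOp (e i) (δ i)) _ (fun i => ?_) f (fun s => ?_)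
    · rw [← LOp.ell_apply_eq_mul]
      exact (iInf_le _ (e i)).trans (iInf_le _ (δ i))
    · conv_lhs => rw [← hu s, f.2.map_sum]
      rfl
  · refine le_iInf fun s => le_iInf fun γ => ?_
    change _ ≤ μ (G.ellOp (f.1 s) γ)
    rw [LOp.ell_apply_eq_mul]
    exact (le_max_left _ _).trans (h.2.2 _ _)

/-! ### Sums of fuzzy ideals -/

lemma le_fuzzySum_add {X : Type*} [Add X] (μ ν : X → unitInterval) (u v : X) :
    min (μ u) (ν v) ≤ fuzzySum μ ν (u + v) :=
  le_sSup ⟨u, v, rfl, rfl⟩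

lemma fuzzySum_le {X : Type*} [Add X] {μ ν : X → unitInterval} {x : X} {c : unitInterval}
    (h : ∀ u v, u + v = x → min (μ u) (ν v) ≤ c) : fuzzySum μ ν x ≤ c := by
  refine sSup_le ?_
  rintro _ ⟨u, v, huv, rfl⟩
  exact h u v huv

lemma IsFuzzyIdealL.le_fuzzySum {G : GammaSemiring S Γ} {μ ν : G.LOp → unitInterval}
    (hμ : G.IsFuzzyIdealL μ) (hν : G.IsFuzzyIdealL ν) (f : G.LOp) :
    μ f ≤ GammaSemiring.fuzzySum μ ν f ∧ ν f ≤ GammaSemiring.fuzzySum μ ν f := by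
  constructor
  · have := le_fuzzySum_add μ ν f 0
    rwa [hν.1, min_eq_left unitInterval.le_one',
      show f + 0 = f from LOp.ext' fun s => add_zero _] at this
  · have := le_fuzzySum_add μ ν 0 f
    rwa [hμ.1, min_eq_right unitInterval.le_one',
      show 0 + f = f from LOp.ext' fun s => zero_add _] at this

lemma IsFuzzyIdealL.fuzzySum {G : GammaSemiring S Γ} {μ ν : G.LOp → unitInterval}
    (hμ : G.IsFuzzyIdealL μ) (hν : G.IsFuzzyIdealL ν) :
    G.IsFuzzyIdealL (GammaSemiring.fuzzySum μ ν) := by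
  refine ⟨?_, fun f g => ?_, fun f g => max_le ?_ ?_⟩
  · exact le_antisymm unitInterval.le_one' (hμ.1.ge.trans (hμ.le_fuzzySum hν 0).1)
  · -- Suprema need not be attained, so compare through an arbitrary `d` below the left side:
    -- such a `d` lies below some value in each of the two suprema.
    refine le_of_forall_lt fun d hd => ?_
    obtain ⟨hdf, hdg⟩ := lt_min_iff.mp hd
    obtain ⟨_, ⟨u, v, rfl, rfl⟩, h₁⟩ := lt_sSup_iff.mp hdf
    obtain ⟨_, ⟨u', v', rfl, rfl⟩, h₂⟩ := lt_sSup_iff.mp hdg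
    rw [lt_min_iff] at h₁ h₂
    rw [show u + v + (u' + v') = (u + u') + (v + v') from
      LOp.ext' fun s => add_add_add_comm _ _ _ _]
    exact (lt_min ((lt_min h₁.1 h₂.1).trans_le (hμ.2.1 u u'))
      ((lt_min h₁.2 h₂.2).trans_le (hν.2.1 v v'))).trans_le (le_fuzzySum_add μ ν _ _)
  · refine fuzzySum_le ?_
    rintro u v rfl
    rw [show (u + v) * g = u * g + v * g from rfl]
    exact (min_le_min ((le_max_left _ _).trans (hμ.2.2 u g))
      ((le_max_left _ _).trans (hν.2.2 v g))).trans (le_fuzzySum_add μ ν _ _)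
  · refine fuzzySum_le ?_
    rintro u v rfl
    rw [show f * (u + v) = f * u + f * v from LOp.ext' fun s => f.2.map_add _ _]
    exact (min_le_min ((le_max_right _ _).trans (hμ.2.2 f u))
      ((le_max_right _ _).trans (hν.2.2 f v))).trans (le_fuzzySum_add μ ν _ _)

lemma plusPrime_fuzzySum {G : GammaSemiring S Γ} (hLU : G.HasLeftUnity)
    (hRU : G.HasRightUnity) {σ τ : S → unitInterval} (hσ : G.IsFuzzyIdeal σ)
    (hτ : G.IsFuzzyIdeal τ) :
    G.plusPrime (fuzzySum σ τ) = fuzzySum (G.plusPrime σ) (G.plusPrime τ) := by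
  funext f
  apply le_antisymm
  · have hN := hσ.plusPrime.fuzzySum hτ.plusPrime
    have hle := hσ.plusPrime.le_fuzzySum hτ.plusPrime
    have hσN := plus_mono G fun f => (hle f).1
    have hτN := plus_mono G fun f => (hle f).2
    rw [plus_plusPrime hRU hσ] at hσN
    rw [plus_plusPrime hRU hτ] at hτN
    conv_rhs => rw [← plusPrime_plus hLU hN]
    refine plusPrime_mono G (fun x => fuzzySum_le ?_) f
    rintro u v rfl
    exact (min_le_min (hσN u) (hτN v)).trans (hN.plus.2.1 u v)
  · refine fuzzySum_le ?_
    rintro u v rfl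
    exact le_iInf fun s => (min_le_min (iInf_le _ s) (iInf_le _ s)).trans
      (le_fuzzySum_add σ τ (u.1 s) (v.1 s))

end GammaSemiring

/-- `σ ↦ σ⁺'` is a bijection from the set of fuzzy ideals of `S` onto the
set of fuzzy ideals of `L`, with inverse `μ ↦ μ⁺`; both maps preserve pointwise inclusion,
and `σ ↦ σ⁺'` preserves the lattice operations `⊕` and pointwise minimum, so the lattices
of fuzzy ideals of `S` and of `L` are isomorphic. -/
theorem fuzzy_lattice_iso (G : GammaSemiring S Γ)
    (hLU : G.HasLeftUnity) (hRU : G.HasRightUnity) :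
    (∀ sigma : S → unitInterval, G.IsFuzzyIdeal sigma →
      G.IsFuzzyIdealL (G.plusPrime sigma)) ∧
    (∀ mu : G.LOp → unitInterval, G.IsFuzzyIdealL mu → G.IsFuzzyIdeal (G.plus mu)) ∧
    (∀ sigma : S → unitInterval, G.IsFuzzyIdeal sigma →
      G.plus (G.plusPrime sigma) = sigma) ∧
    (∀ mu : G.LOp → unitInterval, G.IsFuzzyIdealL mu →
      G.plusPrime (G.plus mu) = mu) ∧
    (∀ sigma₁ sigma₂ : S → unitInterval, G.IsFuzzyIdeal sigma₁ → G.IsFuzzyIdeal sigma₂ →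
      ((∀ x : S, sigma₁ x ≤ sigma₂ x) ↔
        ∀ f : G.LOp, G.plusPrime sigma₁ f ≤ G.plusPrime sigma₂ f)) ∧
    (∀ sigma₁ sigma₂ : S → unitInterval, G.IsFuzzyIdeal sigma₁ → G.IsFuzzyIdeal sigma₂ →
      G.plusPrime (GammaSemiring.fuzzySum sigma₁ sigma₂)
        = GammaSemiring.fuzzySum (G.plusPrime sigma₁) (G.plusPrime sigma₂)) ∧
    (∀ sigma₁ sigma₂ : S → unitInterval, G.IsFuzzyIdeal sigma₁ → G.IsFuzzyIdeal sigma₂ →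
      G.plusPrime (fun x => min (sigma₁ x) (sigma₂ x))
        = fun f => min (G.plusPrime sigma₁ f) (G.plusPrime sigma₂ f)) := by
  refine ⟨fun _ h => h.plusPrime, fun _ h => h.plus, fun _ => GammaSemiring.plus_plusPrime hRU,
    fun _ => GammaSemiring.plusPrime_plus hLU, fun σ τ hσ hτ => ⟨G.plusPrime_mono, fun h => ?_⟩,
    fun _ _ => GammaSemiring.plusPrime_fuzzySum hLU hRU, fun _ _ _ _ => funext fun _ => iInf_inf_eq⟩
  have := G.plus_mono h
  rwa [GammaSemiring.plus_plusPrime hRU hσ, GammaSemiring.plus_plusPrime hRU hτ] at this
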